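/- Let σ ∈ ℝ with σ ≠ 0 and define 𝒴 : ℝ × (ℝ \ {0}) × ℝ → ℝ by 𝒴(x,y,z) := −z/(σ y). Then for every h ∈ ℝ and every (x,y,z) with y ≠ 0, the function 𝒴 satisfies the partial differential equation (1/2)σ² 𝒴_xx + (1/2)z² 𝒴_yy + (1/2)h² 𝒴_zz + σ z 𝒴_xy + h z 𝒴_yz + σ h 𝒴_xz − σ² 𝒴 𝒴_x − σ z 𝒴 𝒴_y − σ h 𝒴 𝒴_z = 0, where subscripts denote partial derivatives with respect to the indicated variables x, y, z. -/

import Mathlib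

open Set

/-!
The coefficients `σ, z, h` of the PDE are not differentiated, so its left-hand side is
`½ D²𝒴 - σ 𝒴 D𝒴`, where `D = σ ∂_x + z ∂_y + h ∂_z` has frozen coefficients. In a direction
`(u, v, w)` the derivative of `𝒴 = -z / (σ y)` is `(v z - w y) / (σ y²)`, whose numerator is
constant along the lines in that direction. Hence differentiating once more only multiplies by
`-2 v / y`, and for `v = z` this factor is `2 σ 𝒴`.
-/

section ColeHopf

variable {𝕜 : Type*} [NontriviallyNormedField 𝕜]

/-- The derivative of `f` at `(x, y, z)` in the direction `(u, v, w)`, written in partial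
derivatives. -/
noncomputable def directionalDeriv (u v w : 𝕜) (f : 𝕜 → 𝕜 → 𝕜 → 𝕜) (x y z : 𝕜) : 𝕜 :=
  u * deriv (fun a => f a y z) x
    + v * deriv (fun b => f x b z) y
    + w * deriv (fun c => f x y c) z

/-- The second derivative of `f` at `(x, y, z)` in the direction `(u, v, w)`, written in partial
derivatives. Each mixed partial occurs in one order only, the earlier variable being
differentiated first. -/
noncomputable def secondDirectionalDeriv (u v w : 𝕜) (f : 𝕜 → 𝕜 → 𝕜 → 𝕜) (x y z : 𝕜) : 𝕜 :=
  u ^ 2 * deriv (fun a => deriv (fun a' => f a' y z) a) x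
    + v ^ 2 * deriv (fun b => deriv (fun b' => f x b' z) b) y
    + w ^ 2 * deriv (fun c => deriv (fun c' => f x y c') c) z
    + 2 * u * v * deriv (fun b => deriv (fun a => f a b z) x) y
    + 2 * v * w * deriv (fun c => deriv (fun b => f x b c) y) z
    + 2 * u * w * deriv (fun c => deriv (fun a => f a y c) x) z

/-- The point transformation `𝒴(x, y, z) = -z / (σ y)`. Substituting `y = V` and `z = σ V_x` gives
the Cole–Hopf transformation `U = -V_x / V`. -/
def coleHopf (σ : 𝕜) : 𝕜 → 𝕜 → 𝕜 → 𝕜 :=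
  fun _ y z => -z / (σ * y)

-- For `x = 0` and `0 < n`, both sides are the junk value `0`.
theorem deriv_const_div_pow (c : 𝕜) (n : ℕ) (x : 𝕜) :
    deriv (fun t => c / t ^ n) x = -(n * c) / x ^ (n + 1) := by
  have div_pow_eq_zpow : (fun t : 𝕜 => c / t ^ n) = fun t => c * t ^ (-n : ℤ) := by
    funext t
    rw [zpow_neg, zpow_natCast, div_eq_mul_inv]
  have exponent_eq : (-n - 1 : ℤ) = -((n + 1 : ℕ) : ℤ) := by
    push_cast
    ring
  rw [div_pow_eq_zpow, deriv_const_mul_field, deriv_zpow, exponent_eq, zpow_neg, zpow_natCast]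
  push_cast
  ring

theorem deriv_coleHopf_x (σ x y z : 𝕜) : deriv (fun a => coleHopf σ a y z) x = 0 :=
  deriv_const x _

theorem deriv_coleHopf_y (σ x y z : 𝕜) :
    deriv (fun b => coleHopf σ x b z) y = z / σ / y ^ 2 := by
  simpa [coleHopf, div_div, neg_div] using deriv_const_div_pow (-z / σ) 1 y

theorem deriv_coleHopf_z (σ x y z : 𝕜) :
    deriv (fun c => coleHopf σ x y c) z = -1 / (σ * y) :=
  ((hasDerivAt_id z).neg.div_const (σ * y)).deriv

theorem deriv_deriv_coleHopf_y (σ x y z : 𝕜) :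
    deriv (fun b => deriv (fun b' => coleHopf σ x b' z) b) y = -(2 * (z / σ)) / y ^ 3 := by
  simpa only [deriv_coleHopf_y, Nat.cast_ofNat] using deriv_const_div_pow (z / σ) 2 y

theorem deriv_deriv_coleHopf_y_z (σ x y z : 𝕜) :
    deriv (fun c => deriv (fun b => coleHopf σ x b c) y) z = 1 / σ / y ^ 2 := by
  simp only [deriv_coleHopf_y]
  exact (((hasDerivAt_id z).div_const σ).div_const (y ^ 2)).deriv

theorem directionalDeriv_coleHopf (σ u v w x z : 𝕜) {y : 𝕜} (hy : y ≠ 0) :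
    directionalDeriv u v w (coleHopf σ) x y z = (v * z - w * y) / (σ * y ^ 2) := by
  simp only [directionalDeriv, deriv_coleHopf_x, deriv_coleHopf_y, deriv_coleHopf_z]
  field_simp
  ring

theorem secondDirectionalDeriv_coleHopf (σ u v w x z : 𝕜) {y : 𝕜} (hy : y ≠ 0) :
    secondDirectionalDeriv u v w (coleHopf σ) x y z =
      -2 * v / y * directionalDeriv u v w (coleHopf σ) x y z := by
  rw [directionalDeriv_coleHopf σ u v w x z hy]
  simp only [secondDirectionalDeriv, deriv_coleHopf_x, deriv_coleHopf_z,
    deriv_deriv_coleHopf_y, deriv_deriv_coleHopf_y_z, deriv_const]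
  field_simp
  ring

theorem point_transformation_pde_cole_hopf_general {σ : 𝕜} (hσ : σ ≠ 0) (h x z : 𝕜) {y : 𝕜}
    (hy : y ≠ 0) :
    secondDirectionalDeriv σ z h (coleHopf σ) x y z =
      2 * σ * coleHopf σ x y z * directionalDeriv σ z h (coleHopf σ) x y z := by
  have factor_eq : -2 * z / y = 2 * σ * coleHopf σ x y z := by
    rw [coleHopf]
    field_simp
  rw [secondDirectionalDeriv_coleHopf σ σ z h x z hy, factor_eq]

end ColeHopf

/-- The rational function `𝒴(x,y,z) = -z/(σ y)` satisfies, for every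
`h ∈ ℝ` and every point with `y ≠ 0`, the PDE
`(1/2)σ²𝒴_xx + (1/2)z²𝒴_yy + (1/2)h²𝒴_zz + σz𝒴_xy + hz𝒴_yz + σh𝒴_xz
  - σ²𝒴𝒴_x - σz𝒴𝒴_y - σh𝒴𝒴_z = 0`.
This `𝒴` is the point transformation corresponding to the Cole–Hopf transformation. -/
theorem point_transformation_pde_cole_hopf
    (σ : ℝ) (hσ : σ ≠ 0) :
    ∀ (h x y z : ℝ), y ≠ 0 →
      (fun (𝒴 : ℝ → ℝ → ℝ → ℝ) =>
        (1 / 2) * σ ^ 2 * deriv (fun a => deriv (fun b => 𝒴 b y z) a) x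
          + (1 / 2) * z ^ 2 * deriv (fun a => deriv (fun b => 𝒴 x b z) a) y
          + (1 / 2) * h ^ 2 * deriv (fun a => deriv (fun b => 𝒴 x y b) a) z
          + σ * z * deriv (fun b => deriv (fun a => 𝒴 a b z) x) y
          + h * z * deriv (fun b => deriv (fun a => 𝒴 x a b) y) z
          + σ * h * deriv (fun b => deriv (fun a => 𝒴 a y b) x) z
          - σ ^ 2 * 𝒴 x y z * deriv (fun a => 𝒴 a y z) x
          - σ * z * 𝒴 x y z * deriv (fun a => 𝒴 x a z) y
          - σ * h * 𝒴 x y z * deriv (fun a => 𝒴 x y a) z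
          = 0)
        (fun x y z => -z / (σ * y)) := by
  intro h x y z hy
  have pde := point_transformation_pde_cole_hopf_general hσ h x z hy
  simp only [secondDirectionalDeriv, directionalDeriv, coleHopf] at pde
  linear_combination (1 / 2) * pde
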